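/- arXiv:1001.3750 — 5 statements merged into one kernel-verified Lean document; each statement's English description precedes it below -/
import Mathlib

section
/- Let G be a group and g ∈ G such that (N): the normal closure of {g} in G is all of G, and (A): the abelianization of G is infinite cyclic, generated by the image of g. Let P = G × Z be the direct product of G with a multiplicatively written infinite cyclic group Z with generator z. For any integer d, let N be the normal closure in P of the single element g·z^d. Then P/N is infinite cyclic, with the image of z as a generator. -/
/-- If `g` normally generates `G` and the abelianization of `G` is
infinite cyclic generated by the image of `g`, then for `P = G × ℤ` (with central
generator `z` of the `ℤ` factor) and `N` the normal closure in `P` of `g·z^d`,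
the quotient `P/N` is infinite cyclic, with the image of `z` as a generator. -/
theorem quotient_by_normalClosure_of_meridian_relator_infinite_cyclic
    {G : Type*} [Group G] (g : G)
    (hN : Subgroup.normalClosure ({g} : Set G) = ⊤)
    (hA : ∃ e : Abelianization G ≃* Multiplicative ℤ,
      e (Abelianization.of g) = Multiplicative.ofAdd 1)
    (d : ℤ) :
    ∃ e : ((G × Multiplicative ℤ) ⧸
        Subgroup.normalClosure
          ({((g, (1 : Multiplicative ℤ)) *
              (((1 : G), Multiplicative.ofAdd (1 : ℤ)) : G × Multiplicative ℤ) ^ d)} :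
            Set (G × Multiplicative ℤ))) ≃* Multiplicative ℤ,
      e (QuotientGroup.mk (((1 : G), Multiplicative.ofAdd (1 : ℤ)) : G × Multiplicative ℤ)) =
        Multiplicative.ofAdd 1 := by
  obtain ⟨a, ha⟩ := hA
  set r : G × Multiplicative ℤ := (g, (1 : Multiplicative ℤ)) *
    (((1 : G), Multiplicative.ofAdd (1 : ℤ)) : G × Multiplicative ℤ) ^ d with hr
  let α : G →* Multiplicative ℤ := a.toMonoidHom.comp Abelianization.of
  have hα : α g = Multiplicative.ofAdd 1 := ha
  have hr' : r = (g, α g ^ d) := by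
    rw [hr, hα]; ext <;> simp
  let s : G →* G × Multiplicative ℤ :=
    (MonoidHom.id G).prod ((zpowGroupHom d).comp α)
  have hs : ∀ x, s x = (x, α x ^ d) := fun x => rfl
  have hmem : ∀ x, s x ∈ Subgroup.normalClosure ({r} : Set (G × Multiplicative ℤ)) := by
    have h : Subgroup.normalClosure ({g} : Set G) ≤
        (Subgroup.normalClosure ({r} : Set (G × Multiplicative ℤ))).comap s := by
      apply Subgroup.normalClosure_le_normal
      rw [Set.singleton_subset_iff]
      have : s g = r := by rw [hs, hr']
      change s g ∈ Subgroup.normalClosure ({r} : Set (G × Multiplicative ℤ))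
      rw [this]
      exact Subgroup.subset_normalClosure rfl
    intro x
    exact h (hN ▸ Subgroup.mem_top x)
  let φ : G × Multiplicative ℤ →* Multiplicative ℤ :=
    MonoidHom.snd G (Multiplicative ℤ) /
      ((zpowGroupHom d).comp (α.comp (MonoidHom.fst G (Multiplicative ℤ))))
  have hφ : ∀ p, φ p = p.2 / α p.1 ^ d := fun p => rfl
  have hle : Subgroup.normalClosure ({r} : Set (G × Multiplicative ℤ)) ≤ φ.ker := by
    apply Subgroup.normalClosure_le_normal
    rintro _ rfl
    change φ r = 1
    rw [hφ, hr']
    simp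
  let f := QuotientGroup.lift _ φ hle
  have hf : ∀ p : G × Multiplicative ℤ, f (QuotientGroup.mk p) = φ p := fun p => rfl
  refine ⟨MulEquiv.ofBijective f ⟨?_, ?_⟩, ?_⟩
  · rw [injective_iff_map_eq_one]
    intro q
    induction q using QuotientGroup.induction_on with
    | H p =>
      intro h
      rw [hf, hφ, div_eq_one] at h
      rw [QuotientGroup.eq_one_iff]
      have := hmem p.1
      rwa [hs, ← h] at this
  · intro n
    exact ⟨QuotientGroup.mk (1, n), by rw [hf, hφ]; simp⟩
  · change φ (1, Multiplicative.ofAdd 1) = _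
    rw [hφ]
    simp
end

section
/- Let G be a group and g ∈ G such that (N): the normal closure of {g} in G is all of G, and (A): the abelianization of G is infinite cyclic, generated by the image of g. Let P = G × Z be the direct product of G with a multiplicatively written infinite cyclic group Z with generator z. Let p, k be integers and q a positive integer with gcd(p+k, q) = 1. Let N be the normal closure in P of the two elements g^q and g^{p+k}·z. Then P/N is cyclic of order q (isomorphic to ℤ/qℤ), with the image of g as a generator. -/
/-- If `g` normally generates `G` and the abelianization of `G` is
infinite cyclic generated by the image of `g`, `P = G × ℤ` with central generator
`z` of the `ℤ` factor, `p, k` integers and `q` a positive integer with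
`gcd(p+k, q) = 1`, and `N` is the normal closure in `P` of `g^q` and `g^{p+k}·z`,
then `P/N` is cyclic of order `q`, generated by the image of `g`. -/
theorem quotient_by_normalClosure_twisted_relators_finite_cyclic
    {G : Type*} [Group G] (g : G)
    (hN : Subgroup.normalClosure ({g} : Set G) = ⊤)
    (hA : ∃ e : Abelianization G ≃* Multiplicative ℤ,
      e (Abelianization.of g) = Multiplicative.ofAdd 1)
    (p k : ℤ) (q : ℕ) (hq : 0 < q) (hpkq : Int.gcd (p + k) q = 1) :
    ∃ e : ((G × Multiplicative ℤ) ⧸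
        Subgroup.normalClosure
          ({((g ^ (q : ℤ), (1 : Multiplicative ℤ)) : G × Multiplicative ℤ),
            ((g ^ (p + k), Multiplicative.ofAdd (1 : ℤ)) : G × Multiplicative ℤ)} :
            Set (G × Multiplicative ℤ))) ≃* Multiplicative (ZMod q),
      e (QuotientGroup.mk ((g, (1 : Multiplicative ℤ)) : G × Multiplicative ℤ)) =
        Multiplicative.ofAdd (1 : ZMod q) := by
  obtain ⟨a, ha⟩ := hA
  set N := Subgroup.normalClosure
          ({((g ^ (q : ℤ), (1 : Multiplicative ℤ)) : G × Multiplicative ℤ),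
            ((g ^ (p + k), Multiplicative.ofAdd (1 : ℤ)) : G × Multiplicative ℤ)} :
            Set (G × Multiplicative ℤ)) with hNdef
  let π : G × Multiplicative ℤ →* (G × Multiplicative ℤ) ⧸ N := QuotientGroup.mk' N
  have hπs : Function.Surjective π := QuotientGroup.mk'_surjective N
  let γ := π (g, 1)
  let ζ := π (1, Multiplicative.ofAdd (1 : ℤ))
  have hγz : ∀ n : ℤ, γ ^ n = π (g ^ n, 1) := by
    intro n
    simp only [γ, ← map_zpow, Prod.pow_mk, one_zpow]
  have h1 : γ ^ (q : ℤ) = 1 := by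
    rw [hγz]
    exact (QuotientGroup.eq_one_iff _).2 (Subgroup.subset_normalClosure (by simp))
  have h2 : γ ^ (p + k) * ζ = 1 := by
    rw [hγz, ← map_mul]
    refine (QuotientGroup.eq_one_iff _).2 (Subgroup.subset_normalClosure (by simp))
  have hζ : ζ ∈ Subgroup.center ((G × Multiplicative ℤ) ⧸ N) := by
    rw [Subgroup.mem_center_iff]
    intro x
    obtain ⟨⟨x, n⟩, rfl⟩ := hπs x
    simp only [ζ, ← map_mul, Prod.mk_mul_mk, mul_one, one_mul, mul_comm]
  have hpk : γ ^ (p + k) = ζ⁻¹ := eq_inv_of_mul_eq_one_left h2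
  have hγ : γ ∈ Subgroup.center ((G × Multiplicative ℤ) ⧸ N) := by
    have hb := Int.gcd_eq_gcd_ab (p + k) q
    rw [hpkq] at hb
    have : γ = (ζ⁻¹) ^ (Int.gcdA (p + k) q) := by
      rw [← hpk, ← zpow_mul]
      calc γ = γ ^ (((1 : ℕ) : ℤ)) := by simp
        _ = _ := by rw [hb, zpow_add, zpow_mul γ (q : ℤ), h1, one_zpow, mul_one]
    rw [this]
    exact zpow_mem (inv_mem hζ) _
  have hnorm : (Subgroup.zpowers γ).Normal := by
    constructor
    intro n hn x
    have hc : n ∈ Subgroup.center ((G × Multiplicative ℤ) ⧸ N) :=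
      (Subgroup.zpowers_le.2 hγ) hn
    rw [Subgroup.mem_center_iff.1 hc x, mul_inv_cancel_right]
    exact hn
  have hG : ∀ x : G, π (x, 1) ∈ Subgroup.zpowers γ := by
    have : Subgroup.normalClosure ({g} : Set G) ≤
        (Subgroup.zpowers γ).comap (π.comp (MonoidHom.inl G (Multiplicative ℤ))) := by
      apply Subgroup.normalClosure_le_normal
      rintro _ rfl
      exact Subgroup.mem_zpowers γ
    rw [hN] at this
    exact fun x => this (Subgroup.mem_top x)
  have hZ : ζ ∈ Subgroup.zpowers γ := by
    rw [← inv_inv ζ, ← hpk]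
    exact inv_mem (zpow_mem (Subgroup.mem_zpowers γ) _)
  have hall : ∀ x, x ∈ Subgroup.zpowers γ := by
    intro x
    obtain ⟨⟨x, n⟩, rfl⟩ := hπs x
    have : π (x, n) = π (x, 1) * ζ ^ (Multiplicative.toAdd n) := by
      simp only [ζ, ← map_zpow, ← map_mul]
      congr 1
      ext
      · simp
      · simp [← ofAdd_zsmul]
    rw [this]
    exact mul_mem (hG x) (zpow_mem hZ _)
  let c : Multiplicative ℤ →* Multiplicative (ZMod q) :=
    AddMonoidHom.toMultiplicative (Int.castAddHom (ZMod q))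
  let f : G × Multiplicative ℤ →* Multiplicative (ZMod q) :=
    MonoidHom.coprod (c.comp (a.toMonoidHom.comp Abelianization.of))
      (c.comp (zpowGroupHom (-(p + k))))
  have hcg : c (a (Abelianization.of g)) = Multiplicative.ofAdd (1 : ZMod q) := by
    rw [ha]
    simp [c]
  have hfN : N ≤ f.ker := by
    apply Subgroup.normalClosure_le_normal
    rintro x (rfl | rfl)
    · simp [f, MonoidHom.mem_ker, hcg, ← ofAdd_nsmul]
    · have hc1 : c (Multiplicative.ofAdd 1) = Multiplicative.ofAdd (1 : ZMod q) := by simp [c]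
      change c (a (Abelianization.of (g ^ (p + k)))) *
        c (Multiplicative.ofAdd (1 : ℤ) ^ (-(p + k))) = 1
      rw [map_zpow, map_zpow, map_zpow, map_zpow, hcg, hc1, zpow_neg, mul_inv_cancel]
  let φ : (G × Multiplicative ℤ) ⧸ N →* Multiplicative (ZMod q) := QuotientGroup.lift N f hfN
  have hφγ : φ γ = Multiplicative.ofAdd (1 : ZMod q) := by
    change f (g, 1) = _
    simp [f, hcg]
  have hφz : ∀ n : ℤ, φ (γ ^ n) = Multiplicative.ofAdd (n : ZMod q) := by
    intro n
    rw [map_zpow, hφγ, ← ofAdd_zsmul]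
    simp
  refine ⟨MulEquiv.ofBijective φ ⟨?_, ?_⟩, hφγ⟩
  · rw [injective_iff_map_eq_one]
    intro x hx
    obtain ⟨n, rfl⟩ := Subgroup.mem_zpowers_iff.1 (hall x)
    rw [hφz, ofAdd_eq_one, ZMod.intCast_zmod_eq_zero_iff_dvd] at hx
    obtain ⟨m, rfl⟩ := hx
    rw [zpow_mul, h1, one_zpow]
  · intro y
    obtain ⟨n, hn⟩ := ZMod.intCast_surjective (Multiplicative.toAdd y)
    exact ⟨γ ^ n, by rw [hφz, hn]; rfl⟩
end

section
/- Let G be a group and g ∈ G such that (N): the normal closure of {g} in G is all of G, and (A): the abelianization of G is infinite cyclic, generated by the image of g. Let P = G × Z be the direct product of G with a multiplicatively written infinite cyclic group Z with generator z. Let m, n be positive integers and k an integer with gcd(m, k·n) = 1. Let N be the normal closure in P of the two elements g^m and g^{k·n}·z^n. Then P/N is isomorphic to (ℤ/mℤ) × (ℤ/nℤ). -/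
/-- If `g` normally generates `G` and the abelianization of `G` is
infinite cyclic generated by the image of `g`, `P = G × ℤ` with central generator
`z` of the `ℤ` factor, `m, n` positive integers and `k` an integer with
`gcd(m, k·n) = 1`, and `N` is the normal closure in `P` of `g^m` and `g^{kn}·z^n`,
then `P/N ≅ ℤ/m × ℤ/n`. -/
theorem quotient_by_normalClosure_twisted_relators_zm_zn
    {G : Type*} [Group G] (g : G)
    (hN : Subgroup.normalClosure ({g} : Set G) = ⊤)
    (hA : ∃ e : Abelianization G ≃* Multiplicative ℤ,
      e (Abelianization.of g) = Multiplicative.ofAdd 1)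
    (m n : ℕ) (hm : 0 < m) (hn : 0 < n) (k : ℤ) (hmkn : Int.gcd (m : ℤ) (k * n) = 1) :
    Nonempty (((G × Multiplicative ℤ) ⧸
        Subgroup.normalClosure
          ({((g ^ (m : ℤ), (1 : Multiplicative ℤ)) : G × Multiplicative ℤ),
            ((g ^ (k * (n : ℤ)), Multiplicative.ofAdd (n : ℤ)) : G × Multiplicative ℤ)} :
            Set (G × Multiplicative ℤ))) ≃*
      (Multiplicative (ZMod m) × Multiplicative (ZMod n))) := by
  obtain ⟨e, he⟩ := hA
  set N := Subgroup.normalClosure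
          ({((g ^ (m : ℤ), (1 : Multiplicative ℤ)) : G × Multiplicative ℤ),
            ((g ^ (k * (n : ℤ)), Multiplicative.ofAdd (n : ℤ)) : G × Multiplicative ℤ)} :
            Set (G × Multiplicative ℤ)) with hNdef
  let q : G × Multiplicative ℤ →* (G × Multiplicative ℤ) ⧸ N := QuotientGroup.mk' N
  have hqs : Function.Surjective q := QuotientGroup.mk'_surjective N
  have hk : ∀ x, q x = 1 ↔ x ∈ N := fun x => QuotientGroup.eq_one_iff x
  let f : G →* (G × Multiplicative ℤ) ⧸ N := q.comp (MonoidHom.inl G (Multiplicative ℤ))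
  let ζ : (G × Multiplicative ℤ) ⧸ N := q (1, Multiplicative.ofAdd 1)
  have hζc : ∀ y, Commute ζ y := by
    intro y
    obtain ⟨⟨a, b⟩, rfl⟩ := hqs y
    change q _ * q _ = q _ * q _
    rw [← map_mul, ← map_mul]
    congr 1
    ext1
    · simp
    · exact mul_comm _ _
  have hζt : ∀ t : ℤ, q (1, Multiplicative.ofAdd t) = ζ ^ t := by
    intro t
    change _ = (q _) ^ t
    rw [← map_zpow]
    congr 1
    ext1
    · simp
    · simp [← ofAdd_zsmul]
  have hdec : ∀ a (t : ℤ), q (a, Multiplicative.ofAdd t) = f a * ζ ^ t := by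
    intro a t
    rw [← hζt]
    change _ = q _ * q _
    rw [← map_mul]
    simp
  have h1 : f g ^ (m : ℤ) = 1 := by
    rw [← map_zpow]
    exact (hk _).2 (Subgroup.subset_normalClosure (by simp))
  have h2 : f g ^ (k * (n : ℤ)) * ζ ^ (n : ℤ) = 1 := by
    rw [← map_zpow, ← hdec]
    exact (hk _).2 (Subgroup.subset_normalClosure (by simp))
  have hgc : ∀ y, Commute (f g) y := by
    intro y
    have hb := Int.gcd_eq_gcd_ab (m : ℤ) (k * n)
    rw [hmkn] at hb
    have h3 : f g = (ζ ^ (n : ℤ))⁻¹ ^ (Int.gcdB (m : ℤ) (k * n)) := by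
      rw [← eq_inv_of_mul_eq_one_left h2, ← zpow_mul]
      conv_lhs => rw [← zpow_one (f g)]
      have : (1 : ℤ) = ((1 : ℕ) : ℤ) := rfl
      rw [this, hb, zpow_add, zpow_mul (f g), h1, one_zpow, one_mul]
    rw [h3]
    exact (((hζc y).zpow_left _).inv_left).zpow_left _
  have hfc : ∀ a, f a ∈ Subgroup.center ((G × Multiplicative ℤ) ⧸ N) := by
    have hsurj : ∀ a, a ∈ (⊤ : Subgroup G) → ∀ y, Commute (f a) y := by
      intro a ha
      rw [← hN] at ha
      induction ha using Subgroup.closure_induction with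
      | mem x hx =>
        obtain ⟨c, hc, hcx⟩ := Group.mem_conjugatesOfSet_iff.1 hx
        obtain rfl : c = g := hc
        obtain ⟨d, rfl⟩ := isConj_iff.1 hcx
        intro y
        have : f (d * c * d⁻¹) = f c := by
          rw [map_mul, map_mul, ← (hgc (f d)).eq, mul_assoc, ← map_mul, mul_inv_cancel, map_one,
            mul_one]
        rw [this]
        exact hgc y
      | one => intro y; rw [map_one]; exact Commute.one_left y
      | mul x y _ _ hx hy => intro w; rw [map_mul]; exact (hx w).mul_left (hy w)
      | inv x _ hx => intro w; rw [map_inv]; exact (hx w).inv_left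
    intro a
    rw [Subgroup.mem_center_iff]
    exact fun y => (hsurj a trivial y).eq.symm
  have hcomm : ∀ x y : (G × Multiplicative ℤ) ⧸ N, x * y = y * x := by
    intro x y
    obtain ⟨⟨a, b⟩, rfl⟩ := hqs x
    have := hdec a b.toAdd
    rw [ofAdd_toAdd] at this
    rw [this]
    have h4 : Commute (f a) y := (Subgroup.mem_center_iff.1 (hfc a) y).symm
    exact (h4.mul_left ((hζc y).zpow_left _)).eq
  have hfa : ∀ a, f a = f g ^ (e (Abelianization.of a)).toAdd := by
    intro a
    letI : CommGroup ((G × Multiplicative ℤ) ⧸ N) :=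
      { (inferInstance : Group ((G × Multiplicative ℤ) ⧸ N)) with mul_comm := hcomm }
    have h5 : Abelianization.of a = Abelianization.of g ^ (e (Abelianization.of a)).toAdd := by
      apply e.injective
      rw [map_zpow, he, ← ofAdd_zsmul]
      simp
    have h6 := congrArg (Abelianization.lift f) h5
    rw [map_zpow] at h6
    simpa only [Abelianization.lift_apply_of] using h6
  let s : G →* Multiplicative ℤ := e.toMonoidHom.comp Abelianization.of
  have hsg : s g = Multiplicative.ofAdd 1 := he
  let φ : G × Multiplicative ℤ →* Multiplicative (ZMod m) × Multiplicative (ZMod n) :=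
    { toFun := fun x => (Multiplicative.ofAdd (((s x.1).toAdd - k * x.2.toAdd : ℤ) : ZMod m),
        Multiplicative.ofAdd ((x.2.toAdd : ℤ) : ZMod n))
      map_one' := by simp
      map_mul' := by
        intro x y
        ext1
        · simp only [Prod.fst_mul, Prod.snd_mul, map_mul, toAdd_mul, ← ofAdd_add]
          congr 1
          push_cast
          ring
        · simp }
  have hφs : Function.Surjective φ := by
    rintro ⟨a, b⟩
    obtain ⟨a', ha⟩ := ZMod.intCast_surjective a.toAdd
    obtain ⟨b', hb⟩ := ZMod.intCast_surjective b.toAdd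
    refine ⟨(g ^ (a' + k * b'), Multiplicative.ofAdd b'), ?_⟩
    change (Multiplicative.ofAdd _, Multiplicative.ofAdd _) = (a, b)
    simp only [map_zpow, hsg, ← ofAdd_zsmul, toAdd_ofAdd, smul_eq_mul, mul_one,
      add_sub_cancel_right, ha, hb, ofAdd_toAdd]
  have hker : N = φ.ker := by
    apply le_antisymm
    · apply Subgroup.normalClosure_le_normal
      rintro x (rfl | rfl)
      · change (Multiplicative.ofAdd _, Multiplicative.ofAdd _) = (1, 1)
        simp [hsg, ← ofAdd_zsmul]
      · change (Multiplicative.ofAdd _, Multiplicative.ofAdd _) = (1, 1)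
        simp only [map_zpow, hsg, ← ofAdd_zsmul, toAdd_ofAdd, smul_eq_mul, mul_one, sub_self]
        simp
    · rintro ⟨a, b⟩ hx
      have hx' : (Multiplicative.ofAdd (((s a).toAdd - k * b.toAdd : ℤ) : ZMod m),
        Multiplicative.ofAdd ((b.toAdd : ℤ) : ZMod n)) = (1, 1) := hx
      rw [Prod.mk.injEq, ofAdd_eq_one, ofAdd_eq_one, ZMod.intCast_zmod_eq_zero_iff_dvd,
        ZMod.intCast_zmod_eq_zero_iff_dvd] at hx'
      obtain ⟨⟨v, hv⟩, ⟨u, hu⟩⟩ := hx'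
      rw [← hk]
      have := hdec a b.toAdd
      rw [ofAdd_toAdd] at this
      rw [this, hfa]
      change f g ^ (s a).toAdd * _ = 1
      have hs : (s a).toAdd = m * v + (k * n) * u := by
        rw [hu] at hv
        linear_combination hv
      rw [hs, hu, zpow_add, zpow_mul (f g), h1, one_zpow, one_mul, zpow_mul (f g), zpow_mul ζ,
        ← (show Commute _ _ from hcomm _ _).mul_zpow, h2, one_zpow]
  exact ⟨(QuotientGroup.quotientMulEquivOfEq hker).trans
    (QuotientGroup.quotientKerEquivOfSurjective φ hφs)⟩
end

section
/- Fix positive integers m and n. Consider the group presented with generators a₁, a₂, a₃, a₄, c, e, ν₁, …, ν_m, μ₁, …, μ_n and relators: the commutators [μ_j, ν_i] for all i, j; c·[a₁,a₂]^{-1}; c·(μ_n⋯μ₂μ₁)^{-1}; the commutators [c, ν_i]; e·[a₃,a₄]^{-1}; e·(ν_m⋯ν₂ν₁)^{-1}; the commutators [e, μ_j]; the commutators [a₁, ν_i]; a₂ν_i a₂^{-1} ν_{i+1}^{-1} for 1 ≤ i ≤ m−1; a₂ν_m a₂^{-1}·((ν_m⋯ν₁)ν₁(ν_m⋯ν₁)^{-1})^{-1};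 the commutators [a₄, μ_j]; a₃μ_j a₃^{-1} μ_{j+1}^{-1} for 1 ≤ j ≤ n−1; a₃μ_n a₃^{-1}·((μ_n⋯μ₁)μ₁(μ_n⋯μ₁)^{-1})^{-1}; together with the additional relators a₁, a₂, a₃, a₄, c, e (i.e., these six generators are killed). The resulting group is isomorphic to (ℤ/mℤ) × (ℤ/nℤ), generated by the images of ν₁ (of order m) and μ₁ (of order n). -/
open scoped commutatorElement

theorem aux_gen (m : ℕ) (a : Multiplicative (ZMod m)) :
    ∃ k : ℤ, a = (Multiplicative.ofAdd (1 : ZMod m)) ^ k := by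
  obtain ⟨k, hk⟩ := ZMod.intCast_surjective (Multiplicative.toAdd a)
  refine ⟨k, ?_⟩
  rw [← ofAdd_zsmul, zsmul_one, hk, ofAdd_toAdd]

theorem aux_hom {G : Type*} [Group G] (m : ℕ) (x : G) (hx : x ^ m = 1) :
    ∃ h : Multiplicative (ZMod m) →* G, h (Multiplicative.ofAdd 1) = x := by
  have h0 : (zmultiplesHom (Additive G) (Additive.ofMul x)) (m : ℤ) = 0 := by
    simp [← ofMul_pow, hx]
  refine ⟨AddMonoidHom.toMultiplicativeLeft
    (ZMod.lift m ⟨zmultiplesHom (Additive G) (Additive.ofMul x), h0⟩), ?_⟩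
  have := ZMod.lift_coe m ⟨zmultiplesHom (Additive G) (Additive.ofMul x), h0⟩ 1
  simp only [Int.cast_one] at this
  simp [this]

theorem aux_ext {G : Type*} [Group G] (m : ℕ) (f g : Multiplicative (ZMod m) →* G)
    (h : f (Multiplicative.ofAdd 1) = g (Multiplicative.ofAdd 1)) : f = g := by
  refine MonoidHom.ext fun a => ?_
  obtain ⟨k, rfl⟩ := aux_gen m a
  rw [map_zpow, map_zpow, h]

theorem aux_prod {G : Type*} [Group G] (m : ℕ) (f : Fin m → G) (x : G) (h : ∀ i, f i = x) :
    (List.ofFn f).reverse.prod = x ^ m := by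
  have : f = fun _ => x := funext h
  subst this
  simp

theorem aux_const {G : Type*} (m : ℕ) (hm : 0 < m) (f : Fin m → G)
    (h : ∀ (i : Fin m) (hi : (i : ℕ) + 1 < m), f i = f ⟨(i : ℕ) + 1, hi⟩) (i : Fin m) :
    f i = f ⟨0, hm⟩ := by
  obtain ⟨i, hi⟩ := i
  induction i with
  | zero => rfl
  | succ k ih => rw [← ih (by omega)]; exact (h ⟨k, by omega⟩ hi).symm

/-- The presentation of `π₁(N − 𝒯_{mn})` from Proposition 4.7, with the
generators `a₁, a₂, a₃, a₄, c, e` (encoded as `Sum.inl 0, …, Sum.inl 5`) additionally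
killed, yields a group isomorphic to `ℤ/m × ℤ/n`, generated by the images of `ν₁`
(generating the `ℤ/m` factor) and `μ₁` (generating the `ℤ/n` factor).
Here `νᵢ` is `Sum.inr (Sum.inl i)` and `μⱼ` is `Sum.inr (Sum.inr j)`. -/
theorem presented_group_braided_tori_iso_zm_zn
    (m n : ℕ) (hm : 0 < m) (hn : 0 < n)
    (R : Set (FreeGroup (Fin 6 ⊕ Fin m ⊕ Fin n)))
    (hR : R = { r : FreeGroup (Fin 6 ⊕ Fin m ⊕ Fin n) |
      -- [μ_j, ν_i] for all i, j
      (∃ (i : Fin m) (j : Fin n),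
        r = ⁅(FreeGroup.of (Sum.inr (Sum.inr j)) : FreeGroup (Fin 6 ⊕ Fin m ⊕ Fin n)),
             FreeGroup.of (Sum.inr (Sum.inl i))⁆) ∨
      -- c · [a₁, a₂]⁻¹
      r = FreeGroup.of (Sum.inl 4 : Fin 6 ⊕ Fin m ⊕ Fin n) *
          (⁅(FreeGroup.of (Sum.inl 0) : FreeGroup (Fin 6 ⊕ Fin m ⊕ Fin n)),
            FreeGroup.of (Sum.inl 1)⁆)⁻¹ ∨
      -- c · (μ_n ⋯ μ₂ μ₁)⁻¹
      r = FreeGroup.of (Sum.inl 4 : Fin 6 ⊕ Fin m ⊕ Fin n) *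
          ((List.ofFn fun j : Fin n =>
            FreeGroup.of (Sum.inr (Sum.inr j) : Fin 6 ⊕ Fin m ⊕ Fin n)).reverse.prod)⁻¹ ∨
      -- [c, ν_i]
      (∃ i : Fin m,
        r = ⁅(FreeGroup.of (Sum.inl 4) : FreeGroup (Fin 6 ⊕ Fin m ⊕ Fin n)),
             FreeGroup.of (Sum.inr (Sum.inl i))⁆) ∨
      -- e · [a₃, a₄]⁻¹
      r = FreeGroup.of (Sum.inl 5 : Fin 6 ⊕ Fin m ⊕ Fin n) *
          (⁅(FreeGroup.of (Sum.inl 2) : FreeGroup (Fin 6 ⊕ Fin m ⊕ Fin n)),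
            FreeGroup.of (Sum.inl 3)⁆)⁻¹ ∨
      -- e · (ν_m ⋯ ν₂ ν₁)⁻¹
      r = FreeGroup.of (Sum.inl 5 : Fin 6 ⊕ Fin m ⊕ Fin n) *
          ((List.ofFn fun i : Fin m =>
            FreeGroup.of (Sum.inr (Sum.inl i) : Fin 6 ⊕ Fin m ⊕ Fin n)).reverse.prod)⁻¹ ∨
      -- [e, μ_j]
      (∃ j : Fin n,
        r = ⁅(FreeGroup.of (Sum.inl 5) : FreeGroup (Fin 6 ⊕ Fin m ⊕ Fin n)),
             FreeGroup.of (Sum.inr (Sum.inr j))⁆) ∨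
      -- [a₁, ν_i]
      (∃ i : Fin m,
        r = ⁅(FreeGroup.of (Sum.inl 0) : FreeGroup (Fin 6 ⊕ Fin m ⊕ Fin n)),
             FreeGroup.of (Sum.inr (Sum.inl i))⁆) ∨
      -- a₂ ν_i a₂⁻¹ ν_{i+1}⁻¹  (1 ≤ i ≤ m−1)
      (∃ i : Fin m, ∃ h : (i : ℕ) + 1 < m,
        r = FreeGroup.of (Sum.inl 1 : Fin 6 ⊕ Fin m ⊕ Fin n) *
            FreeGroup.of (Sum.inr (Sum.inl i)) *
            (FreeGroup.of (Sum.inl 1 : Fin 6 ⊕ Fin m ⊕ Fin n))⁻¹ *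
            (FreeGroup.of (Sum.inr (Sum.inl ⟨(i : ℕ) + 1, h⟩) : Fin 6 ⊕ Fin m ⊕ Fin n))⁻¹) ∨
      -- a₂ ν_m a₂⁻¹ · ((ν_m⋯ν₁) ν₁ (ν_m⋯ν₁)⁻¹)⁻¹
      r = FreeGroup.of (Sum.inl 1 : Fin 6 ⊕ Fin m ⊕ Fin n) *
          FreeGroup.of (Sum.inr (Sum.inl ⟨m - 1, Nat.sub_lt hm Nat.one_pos⟩)) *
          (FreeGroup.of (Sum.inl 1 : Fin 6 ⊕ Fin m ⊕ Fin n))⁻¹ *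
          ((List.ofFn fun i : Fin m =>
              FreeGroup.of (Sum.inr (Sum.inl i) : Fin 6 ⊕ Fin m ⊕ Fin n)).reverse.prod *
            FreeGroup.of (Sum.inr (Sum.inl ⟨0, hm⟩) : Fin 6 ⊕ Fin m ⊕ Fin n) *
            ((List.ofFn fun i : Fin m =>
              FreeGroup.of (Sum.inr (Sum.inl i) : Fin 6 ⊕ Fin m ⊕ Fin n)).reverse.prod)⁻¹)⁻¹ ∨
      -- [a₄, μ_j]
      (∃ j : Fin n,
        r = ⁅(FreeGroup.of (Sum.inl 3) : FreeGroup (Fin 6 ⊕ Fin m ⊕ Fin n)),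
             FreeGroup.of (Sum.inr (Sum.inr j))⁆) ∨
      -- a₃ μ_j a₃⁻¹ μ_{j+1}⁻¹  (1 ≤ j ≤ n−1)
      (∃ j : Fin n, ∃ h : (j : ℕ) + 1 < n,
        r = FreeGroup.of (Sum.inl 2 : Fin 6 ⊕ Fin m ⊕ Fin n) *
            FreeGroup.of (Sum.inr (Sum.inr j)) *
            (FreeGroup.of (Sum.inl 2 : Fin 6 ⊕ Fin m ⊕ Fin n))⁻¹ *
            (FreeGroup.of (Sum.inr (Sum.inr ⟨(j : ℕ) + 1, h⟩) : Fin 6 ⊕ Fin m ⊕ Fin n))⁻¹) ∨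
      -- a₃ μ_n a₃⁻¹ · ((μ_n⋯μ₁) μ₁ (μ_n⋯μ₁)⁻¹)⁻¹
      r = FreeGroup.of (Sum.inl 2 : Fin 6 ⊕ Fin m ⊕ Fin n) *
          FreeGroup.of (Sum.inr (Sum.inr ⟨n - 1, Nat.sub_lt hn Nat.one_pos⟩)) *
          (FreeGroup.of (Sum.inl 2 : Fin 6 ⊕ Fin m ⊕ Fin n))⁻¹ *
          ((List.ofFn fun j : Fin n =>
              FreeGroup.of (Sum.inr (Sum.inr j) : Fin 6 ⊕ Fin m ⊕ Fin n)).reverse.prod *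
            FreeGroup.of (Sum.inr (Sum.inr ⟨0, hn⟩) : Fin 6 ⊕ Fin m ⊕ Fin n) *
            ((List.ofFn fun j : Fin n =>
              FreeGroup.of (Sum.inr (Sum.inr j) : Fin 6 ⊕ Fin m ⊕ Fin n)).reverse.prod)⁻¹)⁻¹ ∨
      -- kill a₁, a₂, a₃, a₄, c, e
      (∃ t : Fin 6, r = FreeGroup.of (Sum.inl t : Fin 6 ⊕ Fin m ⊕ Fin n)) }) :
    ∃ φ : PresentedGroup R ≃* (Multiplicative (ZMod m) × Multiplicative (ZMod n)),
      φ (PresentedGroup.of (Sum.inr (Sum.inl ⟨0, hm⟩))) =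
        (Multiplicative.ofAdd (1 : ZMod m), 1) ∧
      φ (PresentedGroup.of (Sum.inr (Sum.inr ⟨0, hn⟩))) =
        (1, Multiplicative.ofAdd (1 : ZMod n)) := by
  classical
  have hrel : ∀ r ∈ R, (PresentedGroup.mk R r) = 1 := fun r hr =>
    PresentedGroup.one_of_mem hr
  have ha : ∀ t : Fin 6, (PresentedGroup.mk R (FreeGroup.of (Sum.inl t))) = 1 := by
    intro t
    apply hrel
    rw [hR]
    iterate 13 right
    exact ⟨t, rfl⟩
  have hcomm : ∀ i j, Commute (PresentedGroup.mk R (FreeGroup.of (Sum.inr (Sum.inl i))))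
      (PresentedGroup.mk R (FreeGroup.of (Sum.inr (Sum.inr j)))) := by
    intro i j
    have h := hrel _ (by rw [hR]; left; exact ⟨i, j, rfl⟩)
    rw [map_commutatorElement, commutatorElement_eq_one_iff_commute] at h
    exact h.symm
  have hnu := aux_const m hm
    (fun i => PresentedGroup.mk R (FreeGroup.of (Sum.inr (Sum.inl i)))) (by
      intro i hi
      have h := hrel _ (by rw [hR]; iterate 8 right
                           left; exact ⟨i, hi, rfl⟩)
      simp only [map_mul, map_inv, ha] at h
      simpa [mul_inv_eq_one] using h)
  have hmu := aux_const n hn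
    (fun i => PresentedGroup.mk R (FreeGroup.of (Sum.inr (Sum.inr i)))) (by
      intro i hi
      have h := hrel _ (by rw [hR]; iterate 11 right
                           left; exact ⟨i, hi, rfl⟩)
      simp only [map_mul, map_inv, ha] at h
      simpa [mul_inv_eq_one] using h)
  have hnupow : (PresentedGroup.mk R (FreeGroup.of (Sum.inr (Sum.inl ⟨0, hm⟩)))) ^ m = 1 := by
    have h := hrel _ (by rw [hR]; iterate 5 right
                         left; rfl)
    rw [map_mul, ha, one_mul, map_inv, inv_eq_one, map_list_prod, List.map_reverse,
      List.map_ofFn] at h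
    exact (aux_prod m _ _ hnu).symm.trans h
  have hmupow : (PresentedGroup.mk R (FreeGroup.of (Sum.inr (Sum.inr ⟨0, hn⟩)))) ^ n = 1 := by
    have h := hrel _ (by rw [hR]; iterate 2 right
                         left; rfl)
    rw [map_mul, ha, one_mul, map_inv, inv_eq_one, map_list_prod, List.map_reverse,
      List.map_ofFn] at h
    exact (aux_prod n _ _ hmu).symm.trans h
  obtain ⟨f, hf⟩ := aux_hom m _ hnupow
  obtain ⟨g, hg⟩ := aux_hom n _ hmupow
  have hfg : ∀ a b, Commute (f a) (g b) := by
    intro a b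
    obtain ⟨k, rfl⟩ := aux_gen m a
    obtain ⟨l, rfl⟩ := aux_gen n b
    rw [map_zpow, map_zpow, hf, hg]
    exact (hcomm _ _).zpow_zpow k l
  let F : Fin 6 ⊕ Fin m ⊕ Fin n → Multiplicative (ZMod m) × Multiplicative (ZMod n) :=
    Sum.elim (fun _ => 1) (Sum.elim (fun _ => (Multiplicative.ofAdd 1, 1))
      (fun _ => (1, Multiplicative.ofAdd 1)))
  have hFa : ∀ t, F (Sum.inl t) = 1 := fun _ => rfl
  have hFn : ∀ i, F (Sum.inr (Sum.inl i)) = (Multiplicative.ofAdd 1, 1) := fun _ => rfl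
  have hFm : ∀ i, F (Sum.inr (Sum.inr i)) = (1, Multiplicative.ofAdd 1) := fun _ => rfl
  have hPn : FreeGroup.lift F ((List.ofFn fun i : Fin m =>
      FreeGroup.of (Sum.inr (Sum.inl i) : Fin 6 ⊕ Fin m ⊕ Fin n)).reverse.prod) = 1 := by
    rw [map_list_prod, List.map_reverse, List.map_ofFn,
      aux_prod m _ (Multiplicative.ofAdd 1, 1) (fun i => by simp [hFn])]
    ext <;> simp [← ofAdd_nsmul]
  have hPm : FreeGroup.lift F ((List.ofFn fun i : Fin n =>
      FreeGroup.of (Sum.inr (Sum.inr i) : Fin 6 ⊕ Fin m ⊕ Fin n)).reverse.prod) = 1 := by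
    rw [map_list_prod, List.map_reverse, List.map_ofFn,
      aux_prod n _ (1, Multiplicative.ofAdd 1) (fun i => by simp [hFm])]
    ext <;> simp [← ofAdd_nsmul]
  have hF : ∀ r ∈ R, FreeGroup.lift F r = 1 := by
    intro r hr
    rw [hR] at hr
    rcases hr with ⟨i, j, rfl⟩ | rfl | rfl | ⟨i, rfl⟩ | rfl | rfl | ⟨i, rfl⟩ | ⟨i, rfl⟩ |
      ⟨i, h, rfl⟩ | rfl | ⟨i, rfl⟩ | ⟨i, h, rfl⟩ | rfl | ⟨t, rfl⟩ <;>
    simp only [map_mul, map_inv, map_commutatorElement, FreeGroup.lift_apply_of, hPn, hPm, hFa, hFn,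
      hFm] <;>
    simp [commutatorElement_def]
  let φ := PresentedGroup.toGroup hF
  let ψ := MonoidHom.noncommCoprod f g hfg
  have hφ : ∀ x, φ (PresentedGroup.mk R (FreeGroup.of x)) = F x := fun x =>
    PresentedGroup.toGroup.of hF
  refine ⟨MonoidHom.toMulEquiv φ ψ ?_ ?_, hφ _, hφ _⟩
  · apply PresentedGroup.ext
    intro x
    change ψ (φ (PresentedGroup.mk R (FreeGroup.of x))) = PresentedGroup.mk R (FreeGroup.of x)
    rw [hφ]
    rcases x with t | i | j
    · rw [hFa, ha, map_one]
    · rw [hFn]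
      simpa [ψ, hf] using (hnu i).symm
    · rw [hFm]
      simpa [ψ, hg] using (hmu j).symm
  · have h1 : φ.comp f = MonoidHom.inl _ _ := by
      apply aux_ext
      rw [MonoidHom.comp_apply, hf, hφ, hFn, MonoidHom.inl_apply]
    have h2 : φ.comp g = MonoidHom.inr _ _ := by
      apply aux_ext
      rw [MonoidHom.comp_apply, hg, hφ, hFm, MonoidHom.inr_apply]
    refine MonoidHom.ext fun p => ?_
    obtain ⟨a, b⟩ := p
    have h1a := DFunLike.congr_fun h1 a
    have h2b := DFunLike.congr_fun h2 b
    rw [MonoidHom.comp_apply] at h1a h2b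
    change φ (f a * g b) = (a, b)
    rw [map_mul, h1a, h2b]
    simp
end

section
/- Fix integers m ≥ 1 and n ≥ 1. Consider the group presented with generators μ₁, …, μ_m, ν₁, …, ν_n and relators: the commutators [μ_i, ν_j] for all 1 ≤ i ≤ m, 1 ≤ j ≤ n; the product μ₁μ₂⋯μ_m; and the product ν₁ν₂⋯ν_n. This presented group is isomorphic to the direct product F_{m−1} × F_{n−1} of a free group of rank m−1 and a free group of rank n−1. -/
open scoped commutatorElement

/-- Images of the generators of the punctured sphere group in the free group. -/
def sphGen (k : ℕ) : Fin (k + 1) → FreeGroup (Fin k) :=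
  Fin.cons ((List.ofFn fun i : Fin k => FreeGroup.of i).prod)⁻¹ FreeGroup.of

theorem sphGen_prod (k : ℕ) : (List.ofFn (sphGen k)).prod = 1 := by
  rw [List.ofFn_succ]
  simp [sphGen]

theorem map_ofFn_prod {G H : Type*} [Group G] [Group H] (φ : G →* H) {k : ℕ} (f : Fin k → G) :
    φ (List.ofFn f).prod = (List.ofFn fun i => φ (f i)).prod := by
  rw [map_list_prod, List.map_ofFn]
  rfl

theorem lift_sphGen {G : Type*} [Group G] {k : ℕ} (f : Fin (k + 1) → G)
    (hf : (List.ofFn f).prod = 1) (i : Fin (k + 1)) :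
    FreeGroup.lift (fun i : Fin k => f i.succ) (sphGen k i) = f i := by
  refine Fin.cases ?_ (fun i => ?_) i
  · rw [List.ofFn_succ, List.prod_cons] at hf
    simp only [sphGen, Fin.cons_zero, map_inv, map_ofFn_prod, FreeGroup.lift_apply_of]
    exact (eq_inv_of_mul_eq_one_left hf).symm
  · simp [sphGen]

theorem lift_commute {G α β : Type*} [Group G] (f : α → G) (g : β → G)
    (h : ∀ a b, Commute (f a) (g b)) (x : FreeGroup α) (y : FreeGroup β) :
    Commute (FreeGroup.lift f x) (FreeGroup.lift g y) := by
  induction x using FreeGroup.induction_on with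
  | C1 => simp
  | of a =>
    induction y using FreeGroup.induction_on with
    | C1 => simp
    | of b => simpa using h a b
    | inv_of b hb => rw [map_inv]; exact hb.inv_right
    | mul x y hx hy => rw [map_mul]; exact hx.mul_right hy
  | inv_of b hb => rw [map_inv]; exact hb.inv_left
  | mul x y hx hy => rw [map_mul]; exact hx.mul_left hy

/-- The group presented by generators `μ₁,…,μ_m, ν₁,…,ν_n` and
relators `[μᵢ,νⱼ]` (all `i, j`), `μ₁μ₂⋯μ_m` and `ν₁ν₂⋯ν_n` is isomorphic to the
direct product `F_{m−1} × F_{n−1}` of free groups of ranks `m−1` and `n−1`. -/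
theorem presented_group_punctured_spheres_iso_prod_free
    (m n : ℕ) (hm : 1 ≤ m) (hn : 1 ≤ n)
    (R : Set (FreeGroup (Fin m ⊕ Fin n)))
    (hR : R = { r : FreeGroup (Fin m ⊕ Fin n) |
      (∃ (i : Fin m) (j : Fin n),
        r = ⁅(FreeGroup.of (Sum.inl i) : FreeGroup (Fin m ⊕ Fin n)),
             FreeGroup.of (Sum.inr j)⁆) ∨
      r = (List.ofFn fun i : Fin m => FreeGroup.of (Sum.inl i : Fin m ⊕ Fin n)).prod ∨
      r = (List.ofFn fun j : Fin n => FreeGroup.of (Sum.inr j : Fin m ⊕ Fin n)).prod }) :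
    Nonempty (PresentedGroup R ≃*
      (FreeGroup (Fin (m - 1)) × FreeGroup (Fin (n - 1)))) := by
  obtain ⟨k, rfl⟩ : ∃ k, m = k + 1 := ⟨m - 1, by omega⟩
  obtain ⟨l, rfl⟩ : ∃ l, n = l + 1 := ⟨n - 1, by omega⟩
  change Nonempty (PresentedGroup R ≃* (FreeGroup (Fin k) × FreeGroup (Fin l)))
  let F : Fin (k + 1) ⊕ Fin (l + 1) → FreeGroup (Fin k) × FreeGroup (Fin l) :=
    Sum.elim (fun i => MonoidHom.inl _ _ (sphGen k i)) (fun j => MonoidHom.inr _ _ (sphGen l j))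
  have hF : ∀ r ∈ R, FreeGroup.lift F r = 1 := by
    intro r hr
    rw [hR] at hr
    rcases hr with ⟨i, j, rfl⟩ | rfl | rfl
    · rw [map_commutatorElement, commutatorElement_eq_one_iff_mul_comm]
      simp [F]
    · rw [map_ofFn_prod]
      simp only [FreeGroup.lift_apply_of, F, Sum.elim_inl]
      rw [← map_ofFn_prod, sphGen_prod, map_one]
    · rw [map_ofFn_prod]
      simp only [FreeGroup.lift_apply_of, F, Sum.elim_inr]
      rw [← map_ofFn_prod, sphGen_prod, map_one]
  have one_of : ∀ r ∈ R, PresentedGroup.mk R r = 1 := fun r hr =>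
    PresentedGroup.one_of_mem hr
  let a : Fin (k + 1) → PresentedGroup R := fun i => PresentedGroup.of (Sum.inl i)
  let b : Fin (l + 1) → PresentedGroup R := fun j => PresentedGroup.of (Sum.inr j)
  have ha : (List.ofFn a).prod = 1 := by
    have := one_of _ (by rw [hR]; exact Or.inr (Or.inl rfl))
    rw [map_ofFn_prod] at this
    exact this
  have hb : (List.ofFn b).prod = 1 := by
    have := one_of _ (by rw [hR]; exact Or.inr (Or.inr rfl))
    rw [map_ofFn_prod] at this
    exact this
  have hab : ∀ i j, Commute (a i) (b j) := by
    intro i j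
    have := one_of _ (by rw [hR]; exact Or.inl ⟨i, j, rfl⟩)
    rw [map_commutatorElement, commutatorElement_eq_one_iff_mul_comm] at this
    exact this
  let φ : PresentedGroup R →* FreeGroup (Fin k) × FreeGroup (Fin l) := PresentedGroup.toGroup hF
  let ψ : FreeGroup (Fin k) × FreeGroup (Fin l) →* PresentedGroup R :=
    MonoidHom.noncommCoprod (FreeGroup.lift fun i : Fin k => a i.succ)
      (FreeGroup.lift fun j : Fin l => b j.succ)
      (lift_commute _ _ fun i j => hab _ _)
  refine ⟨MonoidHom.toMulEquiv φ ψ ?_ ?_⟩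
  · ext x
    rcases x with i | j
    · have := lift_sphGen a ha i
      simpa [φ, ψ, F] using this
    · have := lift_sphGen b hb j
      simpa [φ, ψ, F] using this
  · have h1 : ∀ i, φ (a i) = MonoidHom.inl _ _ (sphGen k i) := fun i =>
      PresentedGroup.toGroup.of hF
    have h2 : ∀ i, φ (b i) = MonoidHom.inr _ _ (sphGen l i) := fun i =>
      PresentedGroup.toGroup.of hF
    have e1 : (φ.comp ψ).comp (MonoidHom.inl _ _) = MonoidHom.inl _ _ := by
      refine FreeGroup.ext_hom _ _ fun i => ?_
      simp [ψ, h1, sphGen]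
    have e2 : (φ.comp ψ).comp (MonoidHom.inr _ _) = MonoidHom.inr _ _ := by
      refine FreeGroup.ext_hom _ _ fun i => ?_
      simp [ψ, h2, sphGen]
    refine MonoidHom.ext fun x => ?_
    have hx : x = MonoidHom.inl _ _ x.1 * MonoidHom.inr _ _ x.2 := by simp
    rw [hx, map_mul, map_mul]
    exact congrArg₂ (· * ·) (DFunLike.congr_fun e1 x.1) (DFunLike.congr_fun e2 x.2)
end
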